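/- Let U ⊆ (0,1) be an open interval and let u₀, u₁ : U → ℂ be twice differentiable solutions of z(1−z)·u'' + (1 − (3/2)z)·u' − (3/64)·u = 0 on U, with u₀ nowhere vanishing. Let s = u₁/u₀. Then the function z ↦ u₀(z)⁴ · s'(z)² · z²(1−z) is constant on U. (Equivalently, (∂z/∂s)² = c·π₀²·z²(1−z) with π₀ = u₀², which is the statement that the K3 Yukawa coupling C_ss in the normalized-period coordinate s is constant, matching the triviality of the genus zero Gromov–Witten invariants of K3 surfaces.) -/

import Mathlib

/-- If `u₀, u₁` solve `z(1−z)u'' + (1−(3/2)z)u' − (3/64)u = 0` on an open interval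
`U ⊆ (0,1)` with `u₀` nowhere vanishing, and `s = u₁/u₀`, then `u₀⁴·(s')²·z²(1−z)` is
constant on `U`. (Equivalently `(∂z/∂s)² = c·π₀²·z²(1−z)` with `π₀ = u₀²`: the K3
Yukawa coupling `C_ss` in the normalized-period coordinate is constant.) -/
theorem K3_yukawa_constant (c d : ℝ)
    (hU : Set.Ioo c d ⊆ Set.Ioo (0 : ℝ) 1)
    (u₀ u₁ : ℝ → ℂ)
    (hu₀1 : ∀ z ∈ Set.Ioo c d, DifferentiableAt ℝ u₀ z)
    (hu₀2 : ∀ z ∈ Set.Ioo c d, DifferentiableAt ℝ (deriv u₀) z)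
    (hu₁1 : ∀ z ∈ Set.Ioo c d, DifferentiableAt ℝ u₁ z)
    (hu₁2 : ∀ z ∈ Set.Ioo c d, DifferentiableAt ℝ (deriv u₁) z)
    (hode₀ : ∀ z ∈ Set.Ioo c d,
      (z : ℂ) * (1 - (z : ℂ)) * deriv (deriv u₀) z
        + (1 - (3/2 : ℂ) * (z : ℂ)) * deriv u₀ z - (3/64 : ℂ) * u₀ z = 0)
    (hode₁ : ∀ z ∈ Set.Ioo c d,
      (z : ℂ) * (1 - (z : ℂ)) * deriv (deriv u₁) z
        + (1 - (3/2 : ℂ) * (z : ℂ)) * deriv u₁ z - (3/64 : ℂ) * u₁ z = 0)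
    (hu₀ne : ∀ z ∈ Set.Ioo c d, u₀ z ≠ 0) :
    ∃ C : ℂ, ∀ z ∈ Set.Ioo c d,
      (u₀ z) ^ 4 * (deriv (fun x : ℝ => u₁ x / u₀ x) z) ^ 2
        * ((z : ℂ) ^ 2 * (1 - (z : ℂ))) = C := by
  have key : ∀ z ∈ Set.Ioo c d, HasDerivAt (fun z : ℝ =>
      (deriv u₁ z * u₀ z - u₁ z * deriv u₀ z) ^ 2 * ((z : ℂ) ^ 2 * (1 - (z : ℂ)))) 0 z := by
    intro z hz
    have h0 := (hu₀1 z hz).hasDerivAt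
    have h1 := (hu₁1 z hz).hasDerivAt
    have h0' := (hu₀2 z hz).hasDerivAt
    have h1' := (hu₁2 z hz).hasDerivAt
    have hid : HasDerivAt (fun x : ℝ => (x : ℂ)) 1 z := Complex.ofRealCLM.hasDerivAt
    have H := (((h1'.mul h0).sub (h1.mul h0')).pow 2).mul ((hid.pow 2).mul (hid.const_sub 1))
    refine H.congr_deriv ?_
    simp only [Pi.mul_apply, Pi.sub_apply, Pi.pow_apply]
    push_cast
    linear_combination 2 * (z : ℂ) * (deriv u₁ z * u₀ z - u₁ z * deriv u₀ z) *
      (u₀ z * hode₁ z hz - u₁ z * hode₀ z hz)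
  obtain ⟨C, hC⟩ := isOpen_Ioo.exists_is_const_of_deriv_eq_zero isPreconnected_Ioo
    (fun z hz => (key z hz).differentiableAt.differentiableWithinAt)
    (fun z hz => (key z hz).deriv)
  refine ⟨C, fun z hz => ?_⟩
  rw [← hC z hz]
  have hs := ((hu₁1 z hz).hasDerivAt.div (hu₀1 z hz).hasDerivAt (hu₀ne z hz)).deriv
  have hs' : deriv (fun x : ℝ => u₁ x / u₀ x) z =
      (deriv u₁ z * u₀ z - u₁ z * deriv u₀ z) / u₀ z ^ 2 := hs
  rw [hs']
  have := hu₀ne z hz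
  field_simp
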